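/- For Lebesgue-almost every x ∈ (0,1), L_n(x, ℱ, 𝒞ℱ)/log n → 12 log 2/π² as n → ∞, where L_n(x, ℱ, 𝒞ℱ) is the Lochs index from the Farey to the continued fraction sequence of partitions. -/

import Mathlib

open MeasureTheory Filter Set

noncomputable section

/-- The set `E_n^ℱ` of endpoints of the Farey partition `F_n`: rationals of `[0,1]` whose
denominator in lowest terms is at most `n+1`. -/
def fareyPts (n : ℕ) : Set ℝ :=
  {x | ∃ p q : ℕ, q ≠ 0 ∧ q ≤ n + 1 ∧ p ≤ q ∧ Nat.gcd p q = 1 ∧ x = (p : ℝ) / q}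

/-- The interval `I_n^ℱ(x)` of the Farey partition `F_n` containing `x`: the open interval
between the largest Farey point of order `n+1` below `x` and the smallest one above `x`. -/
def fareyInterval (n : ℕ) (x : ℝ) : Set ℝ :=
  Set.Ioo (sSup (fareyPts n ∩ Set.Iio x)) (sInf (fareyPts n ∩ Set.Ioi x))

/-- The partial quotient `a_{m+1}` of the continued fraction expansion of `x ∈ (0,1)`,
obtained from the Gauss map: `cfa x m = ⌊1 / T_G^m x⌋` where `T_G y = {1/y}`. -/
def cfa (x : ℝ) (m : ℕ) : ℕ := ⌊1 / ((fun y => Int.fract (1 / y))^[m] x)⌋₊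

/-- Numerators of the convergents of `x`, shifted by one: `cfp x (m+1) = p_m`, with
`p_{-1} = 1`, `p_0 = 0`, `p_{m+1} = a_{m+1} p_m + p_{m-1}`. -/
def cfp (x : ℝ) : ℕ → ℕ
  | 0 => 1
  | 1 => 0
  | m + 2 => cfa x m * cfp x (m + 1) + cfp x m

/-- Denominators of the convergents of `x`, shifted by one: `cfq x (m+1) = q_m`, with
`q_{-1} = 0`, `q_0 = 1`, `q_{m+1} = a_{m+1} q_m + q_{m-1}`. -/
def cfq (x : ℝ) : ℕ → ℕ
  | 0 => 0
  | 1 => 1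
  | m + 2 => cfa x m * cfq x (m + 1) + cfq x m

/-- The fundamental interval `I_n^{𝒞ℱ}(x)` of depth `n` of the continued fraction
expansion: the open interval with endpoints `p_n/q_n` and `(p_n+p_{n-1})/(q_n+q_{n-1})`,
the former being the left endpoint iff `n` is even. -/
def cfInterval (x : ℝ) (n : ℕ) : Set ℝ :=
  if Even n then
    Set.Ioo ((cfp x (n + 1) : ℝ) / (cfq x (n + 1) : ℝ))
      (((cfp x (n + 1) + cfp x n : ℕ) : ℝ) / ((cfq x (n + 1) + cfq x n : ℕ) : ℝ))
  else
    Set.Ioo (((cfp x (n + 1) + cfp x n : ℕ) : ℝ) / ((cfq x (n + 1) + cfq x n : ℕ) : ℝ))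
      ((cfp x (n + 1) : ℝ) / (cfq x (n + 1) : ℝ))

/-- The Lochs index `L_n(x, 𝒞ℱ, ℱ)` from the continued fraction sequence of partitions to
the Farey sequence of partitions. -/
def lochsCFtoF (x : ℝ) (n : ℕ) : ℕ :=
  sSup {ℓ : ℕ | cfInterval x n ⊆ fareyInterval ℓ x}

/-- The Lochs index `L_n(x, ℱ, 𝒞ℱ)` from the Farey sequence of partitions to the
continued fraction sequence of partitions. -/
def lochsFtoCF (x : ℝ) (n : ℕ) : ℕ :=
  sSup {ℓ : ℕ | fareyInterval n x ⊆ cfInterval x ℓ}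

def bmax {α : Type*} (T : α → α) (f : α → ℝ) : ℕ → α → ℝ
  | 0 => f
  | n + 1 => fun x => f x + max 0 (bmax T f n (T x))

lemma bmax_mono {α : Type*} (T : α → α) (f : α → ℝ) (n : ℕ) : ∀ x, bmax T f n x ≤ bmax T f (n+1) x := by
  induction n with
  | zero => intro x; simp [bmax]
  | succ n ih =>
    intro x
    show f x + max 0 (bmax T f n (T x)) ≤ f x + max 0 (bmax T f (n+1) (T x))
    gcongr
    exact ih _

lemma birkhoffSum_le_bmax {α : Type*} (T : α → α) (f : α → ℝ) (n : ℕ) :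
    ∀ x, birkhoffSum T f (n+1) x ≤ bmax T f n x := by
  induction n with
  | zero => intro x; simp [bmax]
  | succ n ih =>
    intro x
    rw [birkhoffSum_succ']
    show _ ≤ f x + max 0 (bmax T f n (T x))
    have := ih (T x)
    have := le_max_right 0 (bmax T f n (T x))
    linarith

lemma measurable_bmax {α : Type*} [MeasurableSpace α] {T : α → α} {f : α → ℝ} (hT : Measurable T)
    (hf : Measurable f) (n : ℕ) : Measurable (bmax T f n) := by
  induction n with
  | zero => exact hf
  | succ n ih => exact hf.add (measurable_const.max (ih.comp hT))

lemma integrable_bmax {α : Type*} [MeasurableSpace α] {μ : Measure α} [IsProbabilityMeasure μ]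
    {T : α → α} {f : α → ℝ} (hT : MeasurePreserving T μ μ)
    (hf : Integrable f μ) (n : ℕ) : Integrable (bmax T f n) μ := by
  induction n with
  | zero => exact hf
  | succ n ih => exact hf.add ((integrable_zero _ _ _).sup (hT.integrable_comp_of_integrable ih))

lemma birkhoff_bdd {α : Type*} [MeasurableSpace α] {μ : Measure α} [IsProbabilityMeasure μ]
    {T : α → α} {f : α → ℝ} (hT : Ergodic T μ) (hm : Measurable f)
    (hf : Integrable f μ) (hneg : ∫ x, f x ∂μ < 0) :
    ∀ᵐ x ∂μ, ∃ B : ℝ, ∀ n, birkhoffSum T f (n+1) x ≤ B := by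
  set A : Set α := {x | ∀ M : ℕ, ∃ n, (M:ℝ) < bmax T f n x} with hA
  have hTm : Measurable T := hT.toMeasurePreserving.measurable
  have hmono : ∀ x, Monotone (fun n => bmax T f n x) := fun x =>
    monotone_nat_of_le_succ (fun n => bmax_mono T f n x)
  have hAm : MeasurableSet A := by
    have : A = ⋂ M : ℕ, ⋃ n, {x | (M:ℝ) < bmax T f n x} := by ext; simp [hA]
    rw [this]
    exact MeasurableSet.iInter fun M => MeasurableSet.iUnion fun n =>
      measurableSet_lt measurable_const (measurable_bmax hTm hm n)
  have hinv : T ⁻¹' A = A := by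
    ext x
    simp only [hA, mem_preimage, mem_ofPred_eq]
    constructor
    · intro h M
      obtain ⟨K, hK⟩ := exists_nat_gt ((M:ℝ) - f x)
      obtain ⟨n, hn⟩ := h K
      refine ⟨n+1, ?_⟩
      show _ < f x + max 0 (bmax T f n (T x))
      have := le_max_right 0 (bmax T f n (T x))
      linarith
    · intro h M
      obtain ⟨K, hK⟩ := exists_nat_gt ((M:ℝ) + f x)
      obtain ⟨n, hn⟩ := h K
      have h2 := hmono x (Nat.le_succ n)
      have h3 : (K:ℝ) < f x + max 0 (bmax T f n (T x)) := lt_of_lt_of_le hn h2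
      refine ⟨n, ?_⟩
      by_contra hc
      have : max 0 (bmax T f n (T x)) ≤ M := max_le (by positivity) (not_lt.mp hc)
      linarith
  have key := hT.toPreErgodic.ae_mem_or_ae_notMem hAm hinv
  rcases key with h | h
  · exfalso
    have hG : ∀ n, 0 ≤ ∫ x, (f x + max (-(bmax T f n (T x))) 0) ∂μ := by
      intro n
      have e : ∀ x, f x + max (-(bmax T f n (T x))) 0 = bmax T f (n+1) x - bmax T f n (T x) := by
        intro x
        show _ = f x + max 0 (bmax T f n (T x)) - bmax T f n (T x)
        rcases le_total 0 (bmax T f n (T x)) with h | h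
        · rw [max_eq_right h, max_eq_right (by linarith)]; ring
        · rw [max_eq_left h, max_eq_left (by linarith)]; ring
      simp_rw [e]
      have hi : Integrable (fun x => bmax T f n (T x)) μ :=
        hT.toMeasurePreserving.integrable_comp_of_integrable
          (integrable_bmax hT.toMeasurePreserving hf n)
      rw [integral_sub (integrable_bmax hT.toMeasurePreserving hf _) hi]
      have : ∫ x, bmax T f n (T x) ∂μ = ∫ x, bmax T f n x ∂μ := by
        have h1 := integral_map (μ := μ) hTm.aemeasurable (f := bmax T f n)
          (measurable_bmax hTm hm n).aestronglyMeasurable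
        rw [hT.toMeasurePreserving.map_eq] at h1
        exact h1.symm
      rw [this]
      have := integral_mono (integrable_bmax hT.toMeasurePreserving hf n)
        (integrable_bmax hT.toMeasurePreserving hf (n+1)) (bmax_mono T f n)
      linarith
    have hlim : Tendsto (fun n => ∫ x, (f x + max (-(bmax T f n (T x))) 0) ∂μ) atTop
        (nhds (∫ x, f x ∂μ)) := by
      refine tendsto_integral_of_dominated_convergence (fun x => |f x| + |f (T x)|) ?_ ?_ ?_ ?_
      · intro n
        exact (hm.add (((measurable_bmax hTm hm n).comp hTm).neg.max
          measurable_const)).aestronglyMeasurable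
      · exact hf.abs.add (hT.toMeasurePreserving.integrable_comp_of_integrable hf).abs
      · intro n
        refine Eventually.of_forall fun x => ?_
        rw [Real.norm_eq_abs]
        refine (abs_add_le _ _).trans ?_
        refine add_le_add le_rfl ?_
        rw [abs_of_nonneg (le_max_right _ _)]
        refine max_le ?_ (abs_nonneg _)
        have : f (T x) ≤ bmax T f n (T x) := hmono (T x) (Nat.zero_le n)
        have := neg_abs_le (f (T x))
        linarith
      · filter_upwards [h] with x hx
        have hx' : T x ∈ A := by rw [← hinv] at hx; exact hx
        obtain ⟨N, hN⟩ := hx' 0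
        refine tendsto_const_nhds.congr' ?_
        filter_upwards [eventually_ge_atTop N] with n hn
        have : bmax T f N (T x) ≤ bmax T f n (T x) := hmono (T x) hn
        rw [max_eq_right]
        · simp
        · push_cast at hN; linarith
    have := ge_of_tendsto' hlim hG
    linarith
  · filter_upwards [h] with x hx
    simp only [hA, mem_ofPred_eq, not_forall, not_exists, not_lt] at hx
    obtain ⟨M, hM⟩ := hx
    exact ⟨M, fun n => (birkhoffSum_le_bmax T f n x).trans (hM n)⟩

lemma birkhoff_upper {α : Type*} [MeasurableSpace α] {μ : Measure α} [IsProbabilityMeasure μ]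
    {T : α → α} {f : α → ℝ} (hT : Ergodic T μ) (hm : Measurable f)
    (hf : Integrable f μ) :
    ∀ᵐ x ∂μ, ∀ k : ℕ, ∃ B : ℝ, ∀ n : ℕ,
      birkhoffSum T f (n+1) x ≤ B + (n+1) * (∫ x, f x ∂μ + 1 / ((k:ℝ)+1)) := by
  rw [ae_all_iff]
  intro k
  set c := ∫ x, f x ∂μ + 1 / ((k:ℝ)+1) with hc
  have hpos : 0 < 1 / ((k:ℝ)+1) := by positivity
  have := birkhoff_bdd (f := fun x => f x - c) hT (hm.sub_const c) (hf.sub (integrable_const c))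
    (by rw [integral_sub hf (integrable_const c)]; simp; linarith)
  filter_upwards [this] with x hx
  obtain ⟨B, hB⟩ := hx
  refine ⟨B, fun n => ?_⟩
  have h := hB n
  simp only [birkhoffSum, Finset.sum_sub_distrib] at h ⊢
  simp at h
  linarith

theorem birkhoff_ae {α : Type*} [MeasurableSpace α] {μ : Measure α} [IsProbabilityMeasure μ]
    {T : α → α} {f : α → ℝ} (hT : Ergodic T μ) (hm : Measurable f)
    (hf : Integrable f μ) :
    ∀ᵐ x ∂μ, Tendsto (fun n : ℕ => birkhoffSum T f n x / n) atTop (nhds (∫ x, f x ∂μ)) := by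
  filter_upwards [birkhoff_upper hT hm hf, birkhoff_upper hT hm.neg hf.neg] with x h1 h2
  rw [Metric.tendsto_atTop]
  intro ε hε
  obtain ⟨k, hk⟩ := exists_nat_one_div_lt (half_pos hε)
  obtain ⟨B1, hB1⟩ := h1 k
  obtain ⟨B2, hB2⟩ := h2 k
  obtain ⟨N, hN⟩ := exists_nat_gt ((|B1| + |B2|) / (ε/2))
  refine ⟨N+1, fun n hn => ?_⟩
  obtain ⟨m, rfl⟩ : ∃ m, n = m + 1 := ⟨n-1, by omega⟩
  have hmN : (N:ℝ) ≤ m := by exact_mod_cast (by omega : N ≤ m)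
  have a1 := hB1 m
  have a2 := hB2 m
  have e : birkhoffSum T (-f) (m+1) x = - birkhoffSum T f (m+1) x := by
    simp [birkhoffSum]
  have e2 : ∫ x, (-f) x ∂μ = - ∫ x, f x ∂μ := by
    simp [integral_neg]
  rw [e, e2] at a2
  set I := ∫ x, f x ∂μ
  set S := birkhoffSum T f (m+1) x
  rw [div_lt_iff₀ (by positivity)] at hN
  have hm0 : (0:ℝ) < m + 1 := by positivity
  have hb : |B1| + |B2| < (m+1) * (ε/2) := by
    nlinarith
  have hk' : ((m:ℝ)+1) * (1/((k:ℝ)+1)) < (m+1) * (ε/2) := by gcongr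
  have := le_abs_self B1
  have := le_abs_self B2
  have := abs_nonneg B1
  have := abs_nonneg B2
  rw [Real.dist_eq, abs_lt]
  push_cast
  have es : S / ((m:ℝ)+1) - I = (S - (m+1) * I) / (m+1) := by field_simp
  rw [es, lt_div_iff₀ hm0, div_lt_iff₀ hm0]
  constructor <;> nlinarith

def gT (y : ℝ) : ℝ := Int.fract (1 / y)

lemma cfa_eq (x : ℝ) (m : ℕ) : cfa x m = ⌊1 / (gT^[m] x)⌋₊ := rfl

def GoodPt (x : ℝ) : Prop := Irrational x ∧ 0 < x ∧ x < 1

lemma GoodPt.gT {x : ℝ} (h : GoodPt x) : GoodPt (gT x) := by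
  obtain ⟨h1, h2, h3⟩ := h
  have hi : Irrational (Int.fract (1/x)) := by
    have : Irrational (1/x) := by rw [one_div]; exact h1.inv
    rw [Int.fract]
    exact this.sub_intCast _
  refine ⟨hi, ?_, Int.fract_lt_one _⟩
  exact lt_of_le_of_ne (Int.fract_nonneg _) (fun h => hi.ne_zero h.symm)

lemma GoodPt.iter {x : ℝ} (h : GoodPt x) (n : ℕ) : GoodPt (_root_.gT^[n] x) := by
  induction n with
  | zero => exact h
  | succ n ih => rw [Function.iterate_succ_apply']; exact ih.gT

lemma cfa_pos {x : ℝ} (h : GoodPt x) (m : ℕ) : 1 ≤ cfa x m := by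
  rw [cfa_eq]
  obtain ⟨_, h2, h3⟩ := h.iter m
  rw [Nat.le_floor_iff (by positivity), le_div_iff₀ h2]
  simp; exact h3.le

lemma cfa_add {x : ℝ} (h : GoodPt x) (m : ℕ) :
    1 / (gT^[m] x) = cfa x m + gT^[m+1] x := by
  obtain ⟨_, h2, h3⟩ := h.iter m
  rw [Function.iterate_succ_apply', cfa_eq]
  set y := gT^[m] x
  have : 0 ≤ 1/y := by positivity
  rw [gT, natCast_floor_eq_intCast_floor this]
  exact (Int.floor_add_fract _).symm

lemma cfq_succ_succ (x : ℝ) (m : ℕ) :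
    cfq x (m+2) = cfa x m * cfq x (m+1) + cfq x m := by rw [cfq]
lemma cfp_succ_succ (x : ℝ) (m : ℕ) :
    cfp x (m+2) = cfa x m * cfp x (m+1) + cfp x m := by rw [cfp]

lemma cfq_pos {x : ℝ} (h : GoodPt x) (m : ℕ) : 1 ≤ cfq x (m+1) := by
  induction m with
  | zero => simp [cfq]
  | succ m ih => rw [cfq_succ_succ]; have := cfa_pos h m; nlinarith [Nat.zero_le (cfq x m)]

lemma cfq_le {x : ℝ} (h : GoodPt x) (m : ℕ) : cfq x m ≤ cfq x (m+1) := by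
  cases m with
  | zero => simp [cfq]
  | succ m => rw [cfq_succ_succ]; have := cfa_pos h m; nlinarith [Nat.zero_le (cfq x m)]

lemma cf_det (x : ℝ) (m : ℕ) :
    (cfp x m : ℝ) * cfq x (m+1) - cfp x (m+1) * cfq x m = (-1)^m := by
  induction m with
  | zero => simp [cfp, cfq]
  | succ m ih =>
    rw [cfq_succ_succ, cfp_succ_succ, pow_succ, ← ih]
    push_cast; ring

lemma cf_detZ (x : ℝ) (m : ℕ) :
    (cfp x m : ℤ) * cfq x (m+1) - cfp x (m+1) * cfq x m = (-1)^m := by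
  have := cf_det x m
  exact_mod_cast this

def psi (x : ℝ) (n : ℕ) (t : ℝ) : ℝ :=
  (cfp x (n+1) + t * cfp x n) / (cfq x (n+1) + t * cfq x n)

lemma psi_den_pos {x : ℝ} (h : GoodPt x) (n : ℕ) {t : ℝ} (ht : 0 ≤ t) :
    (0:ℝ) < cfq x (n+1) + t * cfq x n := by
  have : (1:ℝ) ≤ cfq x (n+1) := by exact_mod_cast cfq_pos h n
  positivity

lemma psi_succ {x : ℝ} (h : GoodPt x) (n : ℕ) {t : ℝ} (ht : 0 ≤ t) :
    psi x (n+1) t = psi x n (1 / (cfa x n + t)) := by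
  have ha : (1:ℝ) ≤ cfa x n := by exact_mod_cast cfa_pos h n
  have h1 := psi_den_pos h (n+1) ht
  have h2 := psi_den_pos h n (t := 1 / (cfa x n + t)) (by positivity)
  have h3 : (0:ℝ) < cfa x n + t := by positivity
  rw [psi, psi, div_eq_div_iff h1.ne' h2.ne', cfq_succ_succ, cfp_succ_succ]
  field_simp
  push_cast
  ring

lemma psi_iter {x : ℝ} (h : GoodPt x) (n : ℕ) : psi x n (gT^[n] x) = x := by
  induction n with
  | zero => simp [psi, cfp, cfq]
  | succ n ih =>
    rw [psi_succ h n (h.iter _).2.1.le, ← cfa_add h n, one_div_one_div, ih]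

lemma iter_psi {x : ℝ} (h : GoodPt x) (n : ℕ) :
    ∀ t, 0 < t → t < 1 → gT^[n] (psi x n t) = t := by
  induction n with
  | zero => intro t _ _; simp [psi, cfp, cfq]
  | succ n ih =>
    intro t h0 h1
    have ha : (1:ℝ) ≤ cfa x n := by exact_mod_cast cfa_pos h n
    rw [psi_succ h n h0.le, Function.iterate_succ_apply', ih]
    · rw [gT, one_div_one_div]
      rw [Int.fract_natCast_add]
      exact Int.fract_eq_self.2 ⟨h0.le, h1⟩
    · positivity
    · rw [div_lt_one (by positivity)]; linarith

lemma psi_sub {x : ℝ} (h : GoodPt x) (n : ℕ) {s t : ℝ} (hs : 0 ≤ s) (ht : 0 ≤ t) :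
    psi x n t - psi x n s = (t - s) * (-1)^n /
      ((cfq x (n+1) + t * cfq x n) * (cfq x (n+1) + s * cfq x n)) := by
  have h1 := psi_den_pos h n ht
  have h2 := psi_den_pos h n hs
  rw [psi, psi, div_sub_div _ _ h1.ne' h2.ne', ← cf_det x n]
  congr 1
  ring

/-- log of `D_n`. -/
lemma cf_prod {x : ℝ} (h : GoodPt x) (n : ℕ) :
    Real.log (cfq x (n+1) + gT^[n] x * cfq x n) = birkhoffSum gT (fun y => - Real.log y) n x := by
  induction n with
  | zero => simp [cfq]
  | succ n ih =>
    rw [birkhoffSum_succ, ← ih]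
    have hp := (h.iter n).2.1
    have hd := psi_den_pos h n hp.le
    have : (cfq x (n+1+1) + gT^[n+1] x * cfq x (n+1) : ℝ) =
       (cfq x (n+1) + gT^[n] x * cfq x n) * (gT^[n] x)⁻¹ := by
      have e := cfa_add h n
      have e' : gT^[n+1] x = 1 / (gT^[n] x) - cfa x n := by linarith
      rw [cfq_succ_succ, e']
      push_cast
      field_simp
      ring
    rw [this, Real.log_mul hd.ne' (inv_ne_zero hp.ne'), Real.log_inv]

def cfM (x : ℝ) (n : ℕ) : ℕ := cfq x (n+1) + cfq x n

lemma cfM_bounds {x : ℝ} (h : GoodPt x) (n : ℕ) :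
    birkhoffSum gT (fun y => - Real.log y) n x ≤ Real.log (cfM x n) ∧
    Real.log (cfM x n) ≤ birkhoffSum gT (fun y => - Real.log y) n x + Real.log 2 := by
  obtain ⟨-, h0, h1⟩ := h.iter n
  have hd := psi_den_pos h n h0.le
  have hle : (cfq x n : ℝ) ≤ cfq x (n+1) := by exact_mod_cast cfq_le h n
  have hn : (0:ℝ) ≤ cfq x n := by positivity
  rw [← cf_prod h n]
  constructor
  · apply Real.log_le_log hd
    rw [cfM]; push_cast; nlinarith
  · rw [← Real.log_mul hd.ne' (by norm_num)]
    apply Real.log_le_log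
    · have : (1:ℝ) ≤ cfq x (n+1) := by exact_mod_cast cfq_pos h n
      rw [cfM]; push_cast; positivity
    · rw [cfM]; push_cast; nlinarith

lemma cfM_strictMono {x : ℝ} (h : GoodPt x) : StrictMono (cfM x) := by
  refine strictMono_nat_of_lt_succ fun n => ?_
  rw [cfM, cfM, cfq_succ_succ]
  have := cfa_pos h n
  have := cfq_pos h n
  nlinarith [Nat.zero_le (cfq x n)]

/-! Farey part -/

lemma fareyPts_finite (n : ℕ) : (fareyPts n).Finite := by
  refine ((Set.finite_Iic (n+1)).prod (Set.finite_Iic (n+1)) |>.image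
    (fun z : ℕ × ℕ => (z.1:ℝ) / z.2)).subset ?_
  rintro x ⟨p, q, _, hq, hp, _, rfl⟩
  exact ⟨(p, q), ⟨hp.trans hq, hq⟩, rfl⟩

lemma cf_coprime (x : ℝ) (n : ℕ) : Nat.gcd (cfp x (n+1)) (cfq x (n+1)) = 1 := by
  have h := cf_detZ x n
  have : IsCoprime (cfp x (n+1) : ℤ) (cfq x (n+1) : ℤ) := by
    refine ⟨-(-1)^n * cfq x n, (-1)^n * cfp x n, ?_⟩
    have e : ((-1:ℤ)^n) * (-1)^n = 1 := by rw [← mul_pow]; simp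
    linear_combination ((-1:ℤ)^n) * h + e
  exact Nat.isCoprime_iff_coprime.1 this

lemma cf_coprime' (x : ℝ) (n : ℕ) :
    Nat.gcd (cfp x (n+1) + cfp x n) (cfq x (n+1) + cfq x n) = 1 := by
  have h := cf_detZ x n
  have : IsCoprime ((cfp x (n+1) + cfp x n : ℕ) : ℤ) ((cfq x (n+1) + cfq x n : ℕ) : ℤ) := by
    refine ⟨(-1)^n * cfq x (n+1), -(-1)^n * cfp x (n+1), ?_⟩
    have e : ((-1:ℤ)^n) * (-1)^n = 1 := by rw [← mul_pow]; simp
    push_cast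
    linear_combination ((-1:ℤ)^n) * h + e
  exact Nat.isCoprime_iff_coprime.1 this

lemma cfp_le (x : ℝ) (h : GoodPt x) (n : ℕ) : cfp x (n+1) ≤ cfq x (n+1) ∧
    cfp x (n+2) ≤ cfq x (n+2) := by
  induction n with
  | zero => simp [cfp, cfq]; exact cfa_pos h 0
  | succ n ih =>
    refine ⟨ih.2, ?_⟩
    rw [cfp_succ_succ, cfq_succ_succ]
    have := ih.1; have := ih.2
    gcongr

lemma cfp_le' (x : ℝ) (h : GoodPt x) (n : ℕ) :
    cfp x (n+1) + cfp x n ≤ cfq x (n+1) + cfq x n := by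
  cases n with
  | zero => simp [cfp, cfq]
  | succ n => exact add_le_add (cfp_le x h n).2 (cfp_le x h n).1

lemma psi_zero (x : ℝ) (n : ℕ) : psi x n 0 = (cfp x (n + 1) : ℝ) / (cfq x (n + 1) : ℝ) := by
  simp [psi]
lemma psi_one (x : ℝ) (n : ℕ) : psi x n 1 =
    ((cfp x (n + 1) + cfp x n : ℕ) : ℝ) / ((cfq x (n + 1) + cfq x n : ℕ) : ℝ) := by
  simp [psi]

lemma psi_zero_mem {x : ℝ} (h : GoodPt x) {n N : ℕ} (hM : cfM x n ≤ N + 1) :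
    psi x n 0 ∈ fareyPts N := by
  refine ⟨cfp x (n+1), cfq x (n+1), ?_, ?_, (cfp_le x h n).1, cf_coprime x n, psi_zero x n⟩
  · have := cfq_pos h n; omega
  · rw [cfM] at hM; omega

lemma psi_one_mem {x : ℝ} (h : GoodPt x) {n N : ℕ} (hM : cfM x n ≤ N + 1) :
    psi x n 1 ∈ fareyPts N := by
  refine ⟨cfp x (n+1) + cfp x n, cfq x (n+1) + cfq x n, ?_, hM, cfp_le' x h n, cf_coprime' x n, psi_one x n⟩
  · have := cfq_pos h n; omega

lemma cfInterval_eq (x : ℝ) (n : ℕ) : cfInterval x n =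
    if Even n then Ioo (psi x n 0) (psi x n 1) else Ioo (psi x n 1) (psi x n 0) := by
  rw [cfInterval, psi_zero, psi_one]

/-- key separation: a fraction strictly on one side of `p_n/q_n` and within the interval. -/
lemma farey_sep {x : ℝ} (h : GoodPt x) (n : ℕ) (P Q : ℕ) (hQ : Q ≠ 0)
    (h0 : 0 < (-1:ℝ)^n * ((P:ℝ)/Q - psi x n 0))
    (h1 : (-1:ℝ)^n * ((P:ℝ)/Q - psi x n 0) ≤ (-1:ℝ)^n * (psi x n 1 - psi x n 0)) :
    cfM x n ≤ Q := by
  have hq : (0:ℝ) < cfq x (n+1) := by exact_mod_cast cfq_pos h n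
  have hQ' : (0:ℝ) < Q := by positivity
  rw [psi_sub h n le_rfl zero_le_one] at h1
  have e : ((-1:ℝ)^n) * (-1)^n = 1 := by rw [← mul_pow]; simp
  have e1 : (-1:ℝ)^n * ((1 - 0) * (-1)^n /
      ((cfq x (n+1) + 1 * cfq x n) * (cfq x (n+1) + 0 * cfq x n))) =
      1 / ((cfM x n : ℝ) * cfq x (n+1)) := by
    rw [cfM, ← mul_div_assoc]; push_cast
    rw [show (-1:ℝ)^n * ((1-0) * (-1)^n) = 1 by linear_combination e]
    congr 1; ring
  rw [e1] at h1
  have e2 : (-1:ℝ)^n * ((P:ℝ)/Q - psi x n 0) =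
     (((-1:ℤ)^n * ((P:ℤ) * cfq x (n+1) - cfp x (n+1) * Q) : ℤ) : ℝ) / (Q * cfq x (n+1)) := by
    rw [psi_zero, div_sub_div _ _ hQ'.ne' hq.ne']
    push_cast; ring
  rw [e2] at h0 h1
  set K : ℤ := (-1:ℤ)^n * ((P:ℤ) * cfq x (n+1) - cfp x (n+1) * Q)
  have hK : (0:ℝ) < K := by
    rw [div_pos_iff_of_pos_right (by positivity)] at h0
    exact h0
  have hK1 : (1:ℝ) ≤ K := by
    have : 0 < K := by exact_mod_cast hK
    exact_mod_cast this
  have hM : (0:ℝ) < cfM x n := by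
    rw [cfM]; push_cast; positivity
  rw [div_le_div_iff₀ (by positivity) (by positivity)] at h1
  have : (cfM x n : ℝ) * cfq x (n+1) ≤ Q * cfq x (n+1) := by
    have : 0 < (cfM x n : ℝ) * cfq x (n+1) := by positivity
    nlinarith
  exact_mod_cast le_of_mul_le_mul_right this hq

lemma farey_zero (N : ℕ) : (0:ℝ) ∈ fareyPts N := ⟨0, 1, by simp⟩
lemma farey_one (N : ℕ) : (1:ℝ) ∈ fareyPts N := ⟨1, 1, by simp⟩

lemma farey_sub_iff {x : ℝ} (h : GoodPt x) (n N : ℕ) :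
    fareyInterval N x ⊆ cfInterval x n ↔ cfM x n ≤ N + 1 := by
  obtain ⟨-, hx0, hx1⟩ := id h
  obtain ⟨-, ht0, ht1⟩ := h.iter n
  have hd0 := psi_den_pos h n (t := 0) le_rfl
  have hdt := psi_den_pos h n ht0.le
  have hd1 := psi_den_pos h n (t := 1) zero_le_one
  have s0 := psi_sub h n le_rfl ht0.le
  have s1 := psi_sub h n ht0.le zero_le_one
  rw [psi_iter h n] at s0 s1
  have hne1 : (fareyPts N ∩ Iio x).Nonempty := ⟨0, farey_zero N, hx0⟩
  have hne2 : (fareyPts N ∩ Ioi x).Nonempty := ⟨1, farey_one N, hx1⟩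
  have hf1 : (fareyPts N ∩ Iio x).Finite := (fareyPts_finite N).inter_of_left _
  have hf2 : (fareyPts N ∩ Ioi x).Finite := (fareyPts_finite N).inter_of_left _
  have m1 := hne1.csSup_mem hf1
  have m2 := hne2.csInf_mem hf2
  have hlt : sSup (fareyPts N ∩ Iio x) < sInf (fareyPts N ∩ Ioi x) := lt_trans m1.2 m2.2
  have e : ((-1:ℝ)^n) * (-1)^n = 1 := by rw [← mul_pow]; simp
  rw [cfInterval_eq]
  by_cases hev : Even n
  · rw [if_pos hev, fareyInterval]
    rw [hev.neg_one_pow] at s0 s1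
    have l0 : psi x n 0 < x := by
      have : 0 < x - psi x n 0 := by rw [s0]; apply div_pos <;> [linarith; positivity]
      linarith
    have l1 : x < psi x n 1 := by
      have : 0 < psi x n 1 - x := by rw [s1]; apply div_pos <;> [linarith; positivity]
      linarith
    constructor
    · intro hs
      obtain ⟨_, b2⟩ := (Ioo_subset_Ioo_iff hlt).1 hs
      obtain ⟨⟨P, Q, hQ, hQN, -, -, hPQ⟩, hx⟩ := m2
      refine (farey_sep h n P Q hQ ?_ ?_).trans hQN
      · rw [hev.neg_one_pow, ← hPQ]; simp only [mem_Ioi] at hx; linarith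
      · rw [hev.neg_one_pow, ← hPQ]; linarith
    · intro hM
      apply Ioo_subset_Ioo
      · exact le_csSup hf1.bddAbove ⟨psi_zero_mem h hM, l0⟩
      · exact csInf_le hf2.bddBelow ⟨psi_one_mem h hM, l1⟩
  · rw [if_neg hev, fareyInterval]
    have hod := Nat.not_even_iff_odd.1 hev
    rw [hod.neg_one_pow] at s0 s1
    have l0 : x < psi x n 0 := by
      have : x - psi x n 0 < 0 := by rw [s0]; apply div_neg_of_neg_of_pos <;> [linarith; positivity]
      linarith
    have l1 : psi x n 1 < x := by
      have : psi x n 1 - x < 0 := by rw [s1]; apply div_neg_of_neg_of_pos <;> [linarith; positivity]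
      linarith
    constructor
    · intro hs
      obtain ⟨b2, _⟩ := (Ioo_subset_Ioo_iff hlt).1 hs
      obtain ⟨⟨P, Q, hQ, hQN, -, -, hPQ⟩, hx⟩ := m1
      refine (farey_sep h n P Q hQ ?_ ?_).trans hQN
      · rw [hod.neg_one_pow, ← hPQ]; simp only [mem_Iio] at hx; linarith
      · rw [hod.neg_one_pow, ← hPQ]; linarith
    · intro hM
      apply Ioo_subset_Ioo
      · exact le_csSup hf1.bddAbove ⟨psi_one_mem h hM, l1⟩
      · exact csInf_le hf2.bddBelow ⟨psi_zero_mem h hM, l0⟩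

lemma lochs_spec {x : ℝ} (h : GoodPt x) (N : ℕ) :
    cfM x (lochsFtoCF x N) ≤ N + 1 ∧ N + 1 < cfM x (lochsFtoCF x N + 1) := by
  have e : {ℓ : ℕ | fareyInterval N x ⊆ cfInterval x ℓ} = {ℓ | cfM x ℓ ≤ N + 1} := by
    ext ℓ; exact farey_sub_iff h ℓ N
  rw [lochsFtoCF, e]
  have hb : BddAbove {ℓ | cfM x ℓ ≤ N + 1} :=
    ⟨N+1, fun ℓ hℓ => ((cfM_strictMono h).le_apply).trans hℓ⟩
  have hne : {ℓ | cfM x ℓ ≤ N + 1}.Nonempty := ⟨0, by simp [cfM, cfq]⟩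
  refine ⟨Nat.sSup_mem hne hb, ?_⟩
  by_contra hc
  have := le_csSup hb (not_lt.1 hc : sSup {ℓ | cfM x ℓ ≤ N + 1} + 1 ∈ {ℓ | cfM x ℓ ≤ N + 1})
  omega

lemma lochs_tendsto {x : ℝ} (h : GoodPt x) {c : ℝ} (hc : 0 < c)
    (hl : Tendsto (fun n : ℕ => birkhoffSum gT (fun y => - Real.log y) n x / n) atTop (nhds c)) :
    Tendsto (fun n : ℕ => (lochsFtoCF x n : ℝ) / Real.log n) atTop (nhds c⁻¹) := by
  -- log M_n / n → c
  have hM : Tendsto (fun n : ℕ => Real.log (cfM x n) / n) atTop (nhds c) := by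
    have h2 : Tendsto (fun n : ℕ => birkhoffSum gT (fun y => - Real.log y) n x / n + Real.log 2 / n)
        atTop (nhds c) := by
      simpa using hl.add (tendsto_const_div_atTop_nhds_zero_nat (Real.log 2))
    refine tendsto_of_tendsto_of_tendsto_of_le_of_le hl h2 (fun n => ?_) (fun n => ?_)
    · have := (cfM_bounds h n).1
      show _ / _ ≤ _ / _
      gcongr
    · have := (cfM_bounds h n).2
      show _ / _ ≤ _ / _ + _ / _
      rw [← add_div]
      gcongr
  have hM1 : Tendsto (fun n : ℕ => Real.log (cfM x (n+1)) / n) atTop (nhds c) := by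
    have a := (tendsto_add_atTop_iff_nat 1).2 hM
    have b : Tendsto (fun n : ℕ => ((n:ℝ)+1)/n) atTop (nhds 1) := by
      have : Tendsto (fun n : ℕ => 1 + 1/(n:ℝ)) atTop (nhds 1) := by
        simpa using (tendsto_const_div_atTop_nhds_zero_nat (1:ℝ)).const_add 1
      refine this.congr' ?_
      filter_upwards [eventually_gt_atTop 0] with n hn
      have : (0:ℝ) < n := by exact_mod_cast hn
      field_simp
    have := a.mul b
    rw [mul_one] at this
    refine this.congr' ?_
    filter_upwards [eventually_gt_atTop 0] with n hn
    have : (0:ℝ) < n := by exact_mod_cast hn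
    push_cast
    field_simp
  have hL : Tendsto (fun n => lochsFtoCF x n) atTop atTop := by
    rw [tendsto_atTop]
    intro b
    filter_upwards [eventually_ge_atTop (cfM x b)] with n hn
    by_contra hlt
    have h1 := (lochs_spec h n).2
    have h2 : cfM x (lochsFtoCF x n + 1) ≤ cfM x b := (cfM_strictMono h).monotone (by omega)
    omega
  have hpos : ∀ n, (0:ℝ) < cfM x n := fun n => by
    have := cfq_pos h n
    rw [cfM]; exact_mod_cast (by omega)
  have hA : Tendsto (fun n : ℕ => Real.log (n+1) / lochsFtoCF x n) atTop (nhds c) := by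
    refine tendsto_of_tendsto_of_tendsto_of_le_of_le (hM.comp hL) (hM1.comp hL)
      (fun n => ?_) (fun n => ?_)
    · show _ / _ ≤ _ / _
      have : (cfM x (lochsFtoCF x n) : ℝ) ≤ n + 1 := by exact_mod_cast (lochs_spec h n).1
      have := hpos (lochsFtoCF x n)
      gcongr
    · show _ / _ ≤ _ / _
      have : (n + 1 : ℝ) ≤ cfM x (lochsFtoCF x n + 1) := by exact_mod_cast (lochs_spec h n).2.le
      gcongr
  have hB : Tendsto (fun n : ℕ => Real.log (n+1) / Real.log n) atTop (nhds 1) := by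
    have h1 : Tendsto (fun n : ℕ => 1 + (Real.log (n+1) - Real.log n) / Real.log n) atTop
        (nhds 1) := by
      have := (Real.tendsto_log_nat_add_one_sub_log).div_atTop
        (Real.tendsto_log_atTop.comp tendsto_natCast_atTop_atTop)
      simpa using this.const_add 1
    refine h1.congr' ?_
    filter_upwards [eventually_gt_atTop 1] with n hn
    have : 0 < Real.log n := Real.log_pos (by exact_mod_cast hn)
    field_simp
    ring
  have := (hA.inv₀ hc.ne').mul hB
  rw [mul_one] at this
  refine this.congr' ?_
  filter_upwards [eventually_gt_atTop 1] with n hn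
  have : 0 < Real.log ((n:ℝ)+1) := Real.log_pos (by
    have : (1:ℝ) < n := by exact_mod_cast hn
    linarith)
  rw [inv_div]
  field_simp

lemma hasDeriv_xklog (k : ℕ) {x : ℝ} (hx : 0 < x) :
    HasDerivAt (fun x : ℝ => x^(k+1) / ((k:ℝ)+1)^2 - x^k * (x * Real.log x) / ((k:ℝ)+1))
      (x^k * (- Real.log x)) x := by
  have h1 : HasDerivAt (fun x : ℝ => x^(k+1)) (((k+1 : ℕ):ℝ) * x^k) x := by
    simpa using hasDerivAt_pow (k+1) x
  have h2 := h1.mul (Real.hasDerivAt_log hx.ne')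
  have h3 := (h1.div_const (((k:ℝ)+1)^2)).sub (h2.div_const ((k:ℝ)+1))
  have e : (fun x : ℝ => x^(k+1) / ((k:ℝ)+1)^2 - x^k * (x * Real.log x) / ((k:ℝ)+1)) =
    (fun x : ℝ => x^(k+1) / ((k:ℝ)+1)^2) - (fun x : ℝ => (x^(k+1) * Real.log x) / ((k:ℝ)+1)) := by
    ext y; simp; ring
  rw [e]
  refine h3.congr_deriv ?_
  push_cast
  field_simp
  ring

lemma cont_xklog (k : ℕ) :
    Continuous (fun x : ℝ => x^(k+1) / ((k:ℝ)+1)^2 - x^k * (x * Real.log x) / ((k:ℝ)+1)) := by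
  have := Real.continuous_mul_log
  fun_prop

lemma int_xklog (k : ℕ) : IntegrableOn (fun x : ℝ => x^k * (- Real.log x)) (Ioc 0 1) ∧
    ∫ x in Ioc (0:ℝ) 1, x^k * (- Real.log x) = 1 / ((k:ℝ)+1)^2 := by
  have hi : IntegrableOn (fun x : ℝ => x^k * (- Real.log x)) (Ioc 0 1) :=
    intervalIntegral.integrableOn_deriv_of_nonneg (cont_xklog k).continuousOn
      (fun x hx => hasDeriv_xklog k hx.1)
      (fun x hx => mul_nonneg (pow_nonneg hx.1.le _) (by
        have := Real.log_nonpos hx.1.le hx.2.le; linarith))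
  refine ⟨hi, ?_⟩
  rw [← intervalIntegral.integral_of_le zero_le_one,
    intervalIntegral.integral_eq_sub_of_hasDerivAt_of_le zero_le_one (cont_xklog k).continuousOn
      (fun x hx => hasDeriv_xklog k hx.1)
      ((intervalIntegrable_iff_integrableOn_Ioc_of_le zero_le_one).2 hi)]
  simp

lemma hasSum_alt : HasSum (fun k : ℕ => (-1:ℝ)^k * (1 / ((k:ℝ)+1)^2)) (Real.pi^2/12) := by
  have h0 : HasSum (fun k : ℕ => 1 / ((k:ℝ)+1)^2) (Real.pi^2/6) := by
    have := (hasSum_nat_add_iff' 1).2 hasSum_zeta_two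
    simpa using this
  have hs : Summable (fun k : ℕ => (-1:ℝ)^k * (1 / ((k:ℝ)+1)^2)) := by
    refine Summable.of_norm ?_
    refine h0.summable.congr fun k => ?_
    simp
  -- even part
  have hodd : HasSum (fun k : ℕ => 1 / (((2*k+1:ℕ):ℝ)+1)^2) (Real.pi^2/24) := by
    have := h0.div_const 4
    have e1 : (fun k : ℕ => 1 / (((2*k+1:ℕ):ℝ)+1)^2) = fun k : ℕ => 1 / ((k:ℝ)+1)^2 / 4 := by
      ext k; push_cast
      rw [div_div]; congr 1; ring
    rw [e1, show Real.pi^2/24 = Real.pi^2/6/4 by ring]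
    exact this
  have hev : Summable (fun k : ℕ => 1 / (((2*k:ℕ):ℝ)+1)^2) :=
    h0.summable.comp_injective (i := fun k => 2*k) (fun a b h => by simpa using h)
  have hsum := HasSum.even_add_odd (f := fun k : ℕ => 1 / ((k:ℝ)+1)^2) hev.hasSum hodd
  have e := hsum.unique h0
  have h2 : HasSum (fun k : ℕ => (-1:ℝ)^(2*k) * (1 / (((2*k:ℕ):ℝ)+1)^2)) (Real.pi^2/8) := by
    have := hev.hasSum
    rw [show ∑' (k : ℕ), 1 / (((2*k:ℕ):ℝ)+1)^2 = Real.pi^2/8 by linarith] at this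
    simpa [pow_mul] using this
  have h3 : HasSum (fun k : ℕ => (-1:ℝ)^(2*k+1) * (1 / (((2*k+1:ℕ):ℝ)+1)^2)) (-(Real.pi^2/24)) := by
    have := hodd.neg
    refine this.congr_fun ?_ 
    intro k; simp [pow_succ, pow_mul]
  have := HasSum.even_add_odd (f := fun k : ℕ => (-1:ℝ)^k * (1 / ((k:ℝ)+1)^2)) h2 h3
  convert this using 1
  ring

lemma integrableOn_log_div : IntegrableOn (fun x : ℝ => - Real.log x / (1 + x)) (Ioc 0 1) := by
  have h := (int_xklog 0).1
  refine Integrable.mono h ?_ ?_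
  · exact (by fun_prop : Measurable (fun x : ℝ => - Real.log x / (1 + x))).aestronglyMeasurable
  · refine (ae_restrict_iff' measurableSet_Ioc).2 (Eventually.of_forall fun x hx => ?_)
    have := hx.1
    simp only [norm_div, pow_zero, one_mul]
    refine div_le_self (norm_nonneg _) ?_
    rw [Real.norm_eq_abs, abs_of_pos (by linarith)]; linarith

lemma integral_log_div : ∫ x in Ioc (0:ℝ) 1, - Real.log x / (1 + x) = Real.pi^2/12 := by
  have hF := hasSum_integral_of_summable_integral_norm (μ := volume.restrict (Ioc (0:ℝ) 1))
    (F := fun (k:ℕ) (x:ℝ) => (-1)^k * (x^k * (- Real.log x)))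
    (fun k => (int_xklog k).1.const_mul _) ?_
  · have e : ∀ k : ℕ, ∫ x in Ioc (0:ℝ) 1, (-1)^k * (x^k * (- Real.log x)) =
      (-1:ℝ)^k * (1 / ((k:ℝ)+1)^2) := fun k => by
      rw [integral_const_mul, (int_xklog k).2]
    simp_rw [e] at hF
    rw [← hF.unique hasSum_alt, integral_Ioc_eq_integral_Ioo, integral_Ioc_eq_integral_Ioo]
    refine setIntegral_congr_fun measurableSet_Ioo fun x hx => ?_
    have h1 : HasSum (fun k : ℕ => (-x)^k) (1 - (-x))⁻¹ :=
      hasSum_geometric_of_abs_lt_one (by rw [abs_neg, abs_of_pos hx.1]; exact hx.2)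
    have h2 := h1.mul_right (- Real.log x)
    have h3 : ∀ k : ℕ, (-1:ℝ)^k * (x^k * (- Real.log x)) = (-x)^k * (- Real.log x) := fun k => by
      rw [← mul_assoc, ← mul_pow]; simp
    show _ = ∑' k : ℕ, (-1:ℝ)^k * (x^k * (- Real.log x))
    simp_rw [h3]
    rw [h2.tsum_eq, sub_neg_eq_add]
    ring
  · have h0 : Summable (fun k : ℕ => 1 / ((k:ℝ)+1)^2) := by
      have := (hasSum_nat_add_iff' 1).2 hasSum_zeta_two
      simpa using this.summable
    refine h0.congr fun k => ?_
    rw [← (int_xklog k).2]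
    refine setIntegral_congr_fun measurableSet_Ioc fun x hx => ?_
    have := Real.log_nonpos hx.1.le hx.2
    have : 0 ≤ x^k * (- Real.log x) := mul_nonneg (pow_nonneg hx.1.le _) (by linarith)
    simp only [norm_mul, norm_pow, norm_neg, norm_one, one_pow, one_mul]
    rw [← norm_pow, ← norm_neg (Real.log x), ← norm_mul, Real.norm_of_nonneg this]

def gm : Measure ℝ :=
  (volume.restrict (Ioc (0:ℝ) 1)).withDensity (fun x => ENNReal.ofReal (1 / ((1 + x) * Real.log 2)))

lemma measurable_gT : Measurable gT := by
  unfold gT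
  exact measurable_fract.comp (by fun_prop)

lemma gm_Ioc {a b : ℝ} (ha : 0 ≤ a) (hab : a ≤ b) (hb : b ≤ 1) :
    gm (Ioc a b) = ENNReal.ofReal ((Real.log (1+b) - Real.log (1+a)) / Real.log 2) := by
  have hl : 0 < Real.log 2 := Real.log_pos (by norm_num)
  rw [gm, withDensity_apply _ measurableSet_Ioc, Measure.restrict_restrict measurableSet_Ioc,
    inter_eq_left.2 (Ioc_subset_Ioc ha hb)]
  have hc : ContinuousOn (fun x : ℝ => 1 / ((1 + x) * Real.log 2)) (Icc a b) := by
    refine continuousOn_const.div (by fun_prop) ?_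
    intro x hx
    have : 0 < 1 + x := by linarith [hx.1]
    positivity
  have hi : IntervalIntegrable (fun x : ℝ => 1 / ((1 + x) * Real.log 2)) volume a b :=
    hc.intervalIntegrable_of_Icc hab
  rw [← ofReal_integral_eq_lintegral_ofReal
    ((intervalIntegrable_iff_integrableOn_Ioc_of_le hab).1 hi), ← intervalIntegral.integral_of_le hab]
  · congr 1
    rw [intervalIntegral.integral_eq_sub_of_hasDerivAt (f := fun x => Real.log (1+x) / Real.log 2)
      _ hi]
    · ring
    · intro x hx
      rw [uIcc_of_le hab] at hx
      have : 0 < 1 + x := by linarith [hx.1]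
      have := (((hasDerivAt_id x).const_add 1).log this.ne').div_const (Real.log 2)
      refine this.congr_deriv ?_
      rw [div_div]; rfl
  · refine (ae_restrict_iff' measurableSet_Ioc).2 (Eventually.of_forall fun x hx => ?_)
    have : 0 < 1 + x := by linarith [hx.1]
    simp only [Pi.zero_apply]
    positivity

lemma gm_ac : gm ≪ volume.restrict (Ioc (0:ℝ) 1) := withDensity_absolutelyContinuous _ _

lemma gm_inter (s : Set ℝ) (hs : MeasurableSet s) : gm s = gm (s ∩ Ioc 0 1) := by
  rw [gm, withDensity_apply _ hs, withDensity_apply _ (hs.inter measurableSet_Ioc),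
    Measure.restrict_restrict hs, Measure.restrict_restrict (hs.inter measurableSet_Ioc),
    inter_assoc, inter_self]

instance : IsProbabilityMeasure gm := by
  constructor
  rw [gm_inter _ MeasurableSet.univ, univ_inter, gm_Ioc le_rfl zero_le_one le_rfl]
  have hl : 0 < Real.log 2 := Real.log_pos (by norm_num)
  norm_num [hl.ne']

instance : NullSingletonClass gm := ⟨fun x => by
  have h : volume.restrict (Ioc (0:ℝ) 1) {x} = 0 := measure_singleton x
  exact gm_ac h⟩

lemma gT_preimage {a : ℝ} (h0 : 0 ≤ a) (h1 : a < 1) :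
    gT ⁻¹' (Iic a) ∩ Ioc 0 1 = ⋃ k : ℕ, Icc (1/((k:ℝ)+1+a)) (1/((k:ℝ)+1)) := by
  ext x
  simp only [mem_inter_iff, mem_preimage, mem_Iic, mem_Ioc, mem_iUnion, mem_Icc]
  constructor
  · rintro ⟨h, hx0, hx1⟩
    have hn : 0 ≤ 1/x := by positivity
    have e : (⌊1/x⌋₊ : ℝ) + gT x = 1/x := by
      rw [gT, natCast_floor_eq_intCast_floor hn]
      exact Int.floor_add_fract _
    have hge : 1 ≤ ⌊1/x⌋₊ := by
      rw [Nat.le_floor_iff hn, le_div_iff₀ hx0]; simpa using hx1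
    obtain ⟨k, hk⟩ : ∃ k, ⌊1/x⌋₊ = k + 1 := ⟨⌊1/x⌋₊ - 1, by omega⟩
    rw [hk] at e
    push_cast at e
    have hT : 0 ≤ gT x := Int.fract_nonneg _
    refine ⟨k, ?_, ?_⟩
    · rw [div_le_comm₀ (by positivity) hx0]; linarith
    · rw [le_div_comm₀ hx0 (by positivity)]; linarith
  · rintro ⟨k, hk1, hk2⟩
    have hx0 : 0 < x := lt_of_lt_of_le (by positivity) hk1
    rw [div_le_comm₀ (by positivity) hx0] at hk1
    have hk2' := hk2
    rw [le_div_comm₀ hx0 (by positivity)] at hk2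
    refine ⟨?_, hx0, hk2'.trans ?_⟩
    · have e : ⌊1/x⌋ = ((k:ℤ)+1) := by
        rw [Int.floor_eq_iff]; push_cast; constructor <;> linarith
      rw [gT, Int.fract, e]
      push_cast; linarith
    · rw [div_le_one (by positivity)]; linarith [(Nat.cast_nonneg k : (0:ℝ) ≤ k)]

lemma gauss_hasSum {a : ℝ} (h0 : 0 ≤ a) :
    HasSum (fun k : ℕ => (Real.log (1+1/((k:ℝ)+1)) - Real.log (1 + 1/((k:ℝ)+1+a))) / Real.log 2)
      (Real.log (1+a) / Real.log 2) := by
  apply HasSum.div_const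
  rw [hasSum_iff_tendsto_nat_of_nonneg]
  · have hs : ∀ n : ℕ, ∑ k ∈ Finset.range n,
        (Real.log (1+1/((k:ℝ)+1)) - Real.log (1 + 1/((k:ℝ)+1+a))) =
        Real.log (1+a) - Real.log (1 + a/((n:ℝ)+1)) := by
      intro n
      induction n with
      | zero => simp
      | succ n ih =>
        rw [Finset.sum_range_succ, ih]
        have p1 : (0:ℝ) < (n:ℝ)+1 := by positivity
        have p2 : (0:ℝ) < (n:ℝ)+1+a := by positivity
        have p3 : (0:ℝ) < (n:ℝ)+1+1 := by positivity
        have p4 : (0:ℝ) < (n:ℝ)+1+1+a := by positivity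
        have e1 : 1 + a/((n:ℝ)+1) = ((n:ℝ)+1+a)/((n:ℝ)+1) := by field_simp
        have e2 : 1 + 1/((n:ℝ)+1) = ((n:ℝ)+1+1)/((n:ℝ)+1) := by field_simp
        have e3 : 1 + 1/((n:ℝ)+1+a) = ((n:ℝ)+1+1+a)/((n:ℝ)+1+a) := by field_simp; ring
        have e4 : 1 + a/(((n+1:ℕ):ℝ)+1) = ((n:ℝ)+1+1+a)/((n:ℝ)+1+1) := by push_cast; field_simp
        rw [e1, e2, e3, e4, Real.log_div p2.ne' p1.ne', Real.log_div p3.ne' p1.ne',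
          Real.log_div p4.ne' p2.ne', Real.log_div p4.ne' p3.ne']
        ring
    simp_rw [hs]
    have h1 : Tendsto (fun n : ℕ => 1 + a/((n:ℝ)+1)) atTop (nhds 1) := by
      have := (tendsto_const_div_atTop_nhds_zero_nat a).comp (tendsto_add_atTop_nat 1)
      simpa using this.const_add 1
    have h2 := h1.log (by norm_num)
    simpa using h2.const_sub (Real.log (1+a))
  · intro k
    rw [sub_nonneg]
    apply Real.log_le_log (by positivity)
    exact add_le_add le_rfl (one_div_le_one_div_of_le (by positivity) (by linarith))

lemma gT_mp : MeasurePreserving gT gm gm := by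
  refine ⟨measurable_gT, ?_⟩
  have : IsProbabilityMeasure (Measure.map gT gm) :=
    Measure.isProbabilityMeasure_map measurable_gT.aemeasurable
  have hl : 0 < Real.log 2 := Real.log_pos (by norm_num)
  refine Measure.ext_of_Iic _ _ fun a => ?_
  rw [Measure.map_apply measurable_gT measurableSet_Iic]
  rcases lt_or_ge a 0 with ha | ha
  · have e1 : gT ⁻¹' (Iic a) = ∅ := by
      ext x; simp only [mem_preimage, mem_Iic, mem_empty_iff_false, iff_false, not_le]
      exact ha.trans_le (Int.fract_nonneg _)
    have e2 : Iic a ∩ Ioc 0 1 = ∅ := by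
      ext x; simp only [mem_inter_iff, mem_Iic, mem_Ioc, mem_empty_iff_false, iff_false]
      rintro ⟨h, h', _⟩; linarith
    rw [gm_inter _ measurableSet_Iic, e1, e2]
  rcases lt_or_ge a 1 with ha1 | ha1
  · rw [gm_inter _ (measurable_gT measurableSet_Iic), gm_inter _ measurableSet_Iic,
      gT_preimage ha ha1]
    have e2 : Iic a ∩ Ioc 0 1 = Ioc 0 a := by
      ext x; simp only [mem_inter_iff, mem_Iic, mem_Ioc]
      constructor
      · rintro ⟨h, h', _⟩; exact ⟨h', h⟩
      · rintro ⟨h, h'⟩; exact ⟨h', h, by linarith⟩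
    rw [e2, gm_Ioc le_rfl ha ha1.le, measure_iUnion _ (fun _ => measurableSet_Icc)]
    · have e3 : ∀ k : ℕ, gm (Icc (1/((k:ℝ)+1+a)) (1/((k:ℝ)+1))) =
          ENNReal.ofReal ((Real.log (1+1/((k:ℝ)+1)) - Real.log (1 + 1/((k:ℝ)+1+a))) / Real.log 2) := by
        intro k
        rw [measure_congr Ioc_ae_eq_Icc.symm, gm_Ioc (by positivity)]
        · exact one_div_le_one_div_of_le (by positivity) (by linarith)
        · rw [div_le_one (by positivity)]; linarith [(Nat.cast_nonneg k : (0:ℝ) ≤ k)]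
      simp_rw [e3]
      rw [← ENNReal.ofReal_tsum_of_nonneg _ (gauss_hasSum ha).summable, (gauss_hasSum ha).tsum_eq]
      · simp
      · intro k
        apply div_nonneg _ hl.le
        rw [sub_nonneg]
        apply Real.log_le_log (by positivity)
        exact add_le_add le_rfl (one_div_le_one_div_of_le (by positivity) (by linarith))
    · have key : ∀ i j : ℕ, i < j → Disjoint (Icc (1/((i:ℝ)+1+a)) (1/((i:ℝ)+1)))
          (Icc (1/((j:ℝ)+1+a)) (1/((j:ℝ)+1))) := by
        intro i j hij
        rw [Set.disjoint_left]
        rintro x ⟨hx, _⟩ ⟨_, hx'⟩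
        have h3 : 1/((i:ℝ)+1+a) ≤ 1/((j:ℝ)+1) := hx.trans hx'
        rw [one_div_le_one_div (by positivity) (by positivity)] at h3
        have : (i:ℝ) + 1 ≤ j := by exact_mod_cast hij
        linarith
      intro i j hij
      rcases lt_or_gt_of_ne hij with h | h
      · exact key i j h
      · exact (key j i h).symm
  · have e1 : gT ⁻¹' (Iic a) = univ := by
      ext x; simp only [mem_preimage, mem_Iic, mem_univ, iff_true]
      exact (Int.fract_lt_one _).le.trans ha1
    have e2 : Iic a ∩ Ioc 0 1 = univ ∩ Ioc 0 1 := by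
      ext x; simp only [mem_inter_iff, mem_Iic, mem_Ioc, mem_univ, true_and, and_iff_right_iff_imp]
      rintro ⟨h, h'⟩; linarith
    rw [gm_inter _ measurableSet_Iic, e1, e2, ← gm_inter _ MeasurableSet.univ]

lemma psi_mem {x : ℝ} (h : GoodPt x) (n : ℕ) {t : ℝ} (h0 : 0 ≤ t) (h1 : t ≤ 1) :
    psi x n t ∈ Metric.closedBall ((psi x n 0 + psi x n 1)/2) (|psi x n 1 - psi x n 0|/2) := by
  rw [Metric.mem_closedBall, Real.dist_eq]
  have d0 := psi_den_pos h n (t := 0) le_rfl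
  have dt := psi_den_pos h n h0
  have d1 := psi_den_pos h n (t := 1) zero_le_one
  have s0 := psi_sub h n le_rfl h0
  have s1 := psi_sub h n h0 zero_le_one
  rcases neg_one_pow_eq_or ℝ n with e | e
  · rw [e] at s0 s1
    have a0 : 0 ≤ psi x n t - psi x n 0 := by
      rw [s0]; apply div_nonneg <;> [linarith; positivity]
    have a1 : 0 ≤ psi x n 1 - psi x n t := by
      rw [s1]; apply div_nonneg <;> [linarith; positivity]
    rw [abs_of_nonneg (by linarith : 0 ≤ psi x n 1 - psi x n 0), abs_le]
    constructor <;> linarith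
  · rw [e] at s0 s1
    have a0 : psi x n t - psi x n 0 ≤ 0 := by
      rw [s0]; apply div_nonpos_of_nonpos_of_nonneg <;> [linarith; positivity]
    have a1 : psi x n 1 - psi x n t ≤ 0 := by
      rw [s1]; apply div_nonpos_of_nonpos_of_nonneg <;> [linarith; positivity]
    rw [abs_of_nonpos (by linarith : psi x n 1 - psi x n 0 ≤ 0), abs_le]
    constructor <;> linarith

lemma psi_len {x : ℝ} (h : GoodPt x) (n : ℕ) :
    |psi x n 1 - psi x n 0| = 1 / ((cfM x n : ℝ) * cfq x (n+1)) := by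
  have d0 := psi_den_pos h n (t := 0) le_rfl
  have d1 := psi_den_pos h n (t := 1) zero_le_one
  rw [psi_sub h n le_rfl zero_le_one, abs_div, abs_of_pos (mul_pos d1 d0), cfM]
  push_cast
  simp

lemma psi_deriv {x : ℝ} (h : GoodPt x) (n : ℕ) {t : ℝ} (h0 : 0 ≤ t) :
    HasDerivAt (psi x n) ((-1)^n / (cfq x (n+1) + t * cfq x n)^2) t := by
  have d := psi_den_pos h n h0
  have h1 : HasDerivAt (fun t : ℝ => (cfp x (n+1) + t * cfp x n : ℝ)) (cfp x n) t := by
    simpa using ((hasDerivAt_id t).mul_const (cfp x n : ℝ)).const_add (cfp x (n+1) : ℝ)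
  have h2 : HasDerivAt (fun t : ℝ => (cfq x (n+1) + t * cfq x n : ℝ)) (cfq x n) t := by
    simpa using ((hasDerivAt_id t).mul_const (cfq x n : ℝ)).const_add (cfq x (n+1) : ℝ)
  have := h1.div h2 d.ne'
  refine this.congr_deriv ?_
  rw [← cf_det x n]
  congr 1
  ring

lemma vol_lower {x : ℝ} (h : GoodPt x) (n : ℕ) {s : Set ℝ} (hs : MeasurableSet s)
    (hinv : gT ⁻¹' s = s) :
    (volume (s ∩ Ioo 0 1) / 2) * ENNReal.ofReal (|psi x n 1 - psi x n 0|) ≤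
    volume (s ∩ Metric.closedBall ((psi x n 0 + psi x n 1)/2) (|psi x n 1 - psi x n 0|/2)) := by
  have hinvn : gT^[n] ⁻¹' s = s := by
    induction n with
    | zero => rfl
    | succ n ih => rw [Function.iterate_succ, preimage_comp, ih, hinv]
  have hsub : psi x n '' (s ∩ Ioo 0 1) ⊆
      s ∩ Metric.closedBall ((psi x n 0 + psi x n 1)/2) (|psi x n 1 - psi x n 0|/2) := by
    rintro _ ⟨t, ⟨ht, h0, h1⟩, rfl⟩
    refine ⟨?_, psi_mem h n h0.le h1.le⟩
    rw [← hinvn, mem_preimage, iter_psi h n t h0 h1]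
    exact ht
  refine le_trans ?_ (measure_mono hsub)
  have hinj : InjOn (psi x n) (s ∩ Ioo 0 1) := by
    rintro a ⟨_, ha⟩ b ⟨_, hb⟩ hab
    rw [← iter_psi h n a ha.1 ha.2, ← iter_psi h n b hb.1 hb.2, hab]
  have hm : MeasurableSet (s ∩ Ioo (0:ℝ) 1) := hs.inter measurableSet_Ioo
  have := lintegral_image_eq_lintegral_abs_deriv_mul hm
    (fun t ht => (psi_deriv h n ht.2.1.le).hasDerivWithinAt) hinj (fun _ => 1)
  simp only [lintegral_one, mul_one, Measure.restrict_apply_univ] at this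
  rw [this]
  have hq : (1:ℝ) ≤ cfq x (n+1) := by exact_mod_cast cfq_pos h n
  have hle : (cfq x n : ℝ) ≤ cfq x (n+1) := by exact_mod_cast cfq_le h n
  have hqn : (0:ℝ) ≤ cfq x n := by positivity
  have hlow : ∀ t ∈ s ∩ Ioo (0:ℝ) 1, ENNReal.ofReal (|psi x n 1 - psi x n 0|/2) ≤
      ENNReal.ofReal |(-1)^n / ((cfq x (n+1) + t * cfq x n : ℝ))^2| := by
    rintro t ⟨_, h0, h1⟩
    apply ENNReal.ofReal_le_ofReal
    have d := psi_den_pos h n h0.le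
    rw [psi_len h n, abs_div, abs_pow, abs_neg, abs_one, one_pow, abs_of_pos (by positivity : 0 < ((cfq x (n+1) + t * cfq x n : ℝ))^2), div_div, cfM]
    push_cast
    apply one_div_le_one_div_of_le (by positivity)
    have : (cfq x (n+1) + t * cfq x n : ℝ) ≤ cfq x (n+1) + cfq x n := by nlinarith
    calc (cfq x (n+1) + t * cfq x n : ℝ)^2 ≤ (cfq x (n+1) + cfq x n : ℝ)^2 := by gcongr
      _ ≤ _ := by nlinarith
  calc (volume (s ∩ Ioo 0 1) / 2) * ENNReal.ofReal (|psi x n 1 - psi x n 0|)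
      = ENNReal.ofReal (|psi x n 1 - psi x n 0|/2) * volume (s ∩ Ioo 0 1) := by
        rw [ENNReal.ofReal_div_of_pos (by norm_num)]
        simp only [div_eq_mul_inv, ENNReal.ofReal_ofNat]
        ring
    _ = ∫⁻ t in s ∩ Ioo (0:ℝ) 1, ENNReal.ofReal (|psi x n 1 - psi x n 0|/2) := by
        rw [setLIntegral_const]
    _ ≤ _ := setLIntegral_mono' hm hlow

lemma ae_good : ∀ᵐ x ∂(volume.restrict (Ioc (0:ℝ) 1)), GoodPt x := by
  have h1 : ∀ᵐ x ∂(volume : Measure ℝ), Irrational x := by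
    have : {x : ℝ | ¬ Irrational x} = Set.range ((↑) : ℚ → ℝ) := by
      ext x; simp [Irrational]
    rw [ae_iff, this]
    exact (Set.countable_range _).measure_zero _
  rw [ae_restrict_iff' measurableSet_Ioc]
  filter_upwards [h1] with x hx hm
  refine ⟨hx, hm.1, lt_of_le_of_ne hm.2 ?_⟩
  exact hx.ne_one

lemma gT_ergodic : Ergodic gT gm := by
  refine { gT_mp with aeconst_set := ?_ }
  intro s hs hinv
  rw [Filter.eventuallyConst_set]
  by_cases h0 : volume (s ∩ Ioo 0 1) = 0
  · right
    apply gm_ac.ae_le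
    show ∀ᵐ x ∂(volume.restrict (Ioc (0:ℝ) 1)), x ∉ s
    rw [← Measure.restrict_congr_set Ioo_ae_eq_Ioc, ae_iff]
    simp only [not_not]
    rw [show {a | a ∈ s} = s from rfl, Measure.restrict_apply hs]
    exact h0
  · left
    apply gm_ac.ae_le
    have hd := IsUnifLocDoublingMeasure.ae_tendsto_measure_inter_div (volume : Measure ℝ) sᶜ 1
    rw [ae_restrict_iff' hs.compl] at hd
    filter_upwards [ae_good, ae_restrict_of_ae hd] with x hx hdx
    by_contra hxs
    set w : ℕ → ℝ := fun n => (psi x n 0 + psi x n 1)/2 with hw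
    set δ : ℕ → ℝ := fun n => |psi x n 1 - psi x n 0|/2 with hδ
    have hM1 : ∀ n : ℕ, (n:ℝ) + 1 ≤ cfM x n := fun n => by
      have : ∀ n, n + 1 ≤ cfM x n := by
        intro n
        induction n with
        | zero => simp [cfM, cfq]
        | succ n ih => have := cfM_strictMono hx (Nat.lt_succ_self n); grind
      exact_mod_cast this n
    have hδpos : ∀ n, 0 < δ n := fun n => by
      have hq : (1:ℝ) ≤ cfq x (n+1) := by exact_mod_cast cfq_pos hx n
      have := hM1 n
      have : (0:ℝ) < cfM x n := lt_of_lt_of_le (by positivity) this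
      simp only [hδ]; rw [psi_len hx n]; positivity
    have hδlim : Tendsto δ atTop (nhdsWithin 0 (Ioi 0)) := by
      rw [tendsto_nhdsWithin_iff]
      refine ⟨?_, Eventually.of_forall hδpos⟩
      refine squeeze_zero (fun n => (hδpos n).le) (fun n => ?_) tendsto_one_div_add_atTop_nhds_zero_nat
      have hq : (1:ℝ) ≤ cfq x (n+1) := by exact_mod_cast cfq_pos hx n
      have := hM1 n
      simp only [hδ]; rw [psi_len hx n, div_div]
      apply one_div_le_one_div_of_le (by positivity)
      nlinarith [(Nat.cast_nonneg n : (0:ℝ) ≤ n)]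
    have hmem : ∀ᶠ j in atTop, x ∈ Metric.closedBall (w j) (1 * δ j) := by
      refine Eventually.of_forall fun n => ?_
      rw [one_mul]
      have := psi_mem hx n (hx.iter n).2.1.le (hx.iter n).2.2.le
      rwa [psi_iter hx n] at this
    have hlim := hdx hxs w δ hδlim hmem
    set c := volume (s ∩ Ioo 0 1) / 2 with hc
    have hcpos : 0 < c := ENNReal.div_pos h0 (by simp)
    have hle : ∀ n, volume (sᶜ ∩ Metric.closedBall (w n) (δ n)) / volume (Metric.closedBall (w n) (δ n))
        ≤ 1 - c := by
      intro n
      have hv : volume (Metric.closedBall (w n) (δ n)) = ENNReal.ofReal (|psi x n 1 - psi x n 0|) := by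
        rw [Real.volume_closedBall]; congr 1; simp only [hδ]; ring
      have hv0 : volume (Metric.closedBall (w n) (δ n)) ≠ 0 := by
        rw [Real.volume_closedBall]; simpa using hδpos n
      have hvt : volume (Metric.closedBall (w n) (δ n)) ≠ ⊤ := by
        rw [Real.volume_closedBall]; exact ENNReal.ofReal_ne_top
      have hlow := vol_lower hx n hs hinv
      rw [← hv] at hlow
      have hsplit := measure_inter_add_sdiff (μ := volume) (Metric.closedBall (w n) (δ n)) hs
      rw [inter_comm, sdiff_eq, inter_comm _ sᶜ] at hsplit
      have hct : c ≠ ⊤ := by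
        have : volume (s ∩ Ioo (0:ℝ) 1) ≠ ⊤ :=
          ((measure_mono inter_subset_right).trans_lt (by simp : volume (Ioo (0:ℝ) 1) < ⊤)).ne
        exact ENNReal.div_ne_top this (by simp)
      apply ENNReal.le_sub_of_add_le_right hct
      rw [← ENNReal.mul_div_cancel_right (a := c) hv0 hvt, ← ENNReal.add_div]
      apply ENNReal.div_le_of_le_mul
      rw [one_mul]
      calc _ ≤ volume (sᶜ ∩ Metric.closedBall (w n) (δ n)) + volume (s ∩ Metric.closedBall (w n) (δ n)) := by
            gcongr
        _ = _ := by rw [add_comm]; exact hsplit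
    have h1 := le_of_tendsto' hlim hle
    have : (1 - c : ENNReal) < 1 := ENNReal.sub_lt_self (by simp) (by simp) hcpos.ne'
    exact absurd h1 (not_le.2 this)

lemma gm_integral : Integrable (fun x => - Real.log x) gm ∧
    ∫ x, - Real.log x ∂gm = Real.pi^2 / (12 * Real.log 2) := by
  have hl : 0 < Real.log 2 := Real.log_pos (by norm_num)
  have hmeas : Measurable (fun x : ℝ => ENNReal.ofReal (1 / ((1 + x) * Real.log 2))) := by fun_prop
  have hlt : ∀ᵐ x ∂(volume.restrict (Ioc (0:ℝ) 1)),
    ENNReal.ofReal (1 / ((1 + x) * Real.log 2)) < ⊤ := by simp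
  have e : ∀ x ∈ Ioc (0:ℝ) 1, (ENNReal.ofReal (1 / ((1 + x) * Real.log 2))).toReal • (- Real.log x)
      = (Real.log 2)⁻¹ * (- Real.log x / (1 + x)) := by
    intro x hx
    have : 0 < 1 + x := by linarith [hx.1]
    rw [ENNReal.toReal_ofReal (by positivity), smul_eq_mul]
    field_simp
  constructor
  · rw [gm, integrable_withDensity_iff_integrable_smul' hmeas hlt]
    refine (integrableOn_congr_fun e measurableSet_Ioc).2 (integrableOn_log_div.const_mul _)
  · rw [gm, integral_withDensity_eq_integral_toReal_smul hmeas hlt,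
      setIntegral_congr_fun measurableSet_Ioc e, integral_const_mul, integral_log_div]
    field_simp

/-- Lochs-type theorem from Farey to continued fractions: for Lebesgue-a.e. `x`,
`L_n(x, ℱ, 𝒞ℱ)/log n → 12 log 2/π²`. -/
theorem lochsFtoCF_ae :
    ∀ᵐ x ∂(volume.restrict (Set.Icc (0 : ℝ) 1)),
      Tendsto (fun n : ℕ => (lochsFtoCF x n : ℝ) / Real.log n) atTop
        (nhds (12 * Real.log 2 / Real.pi ^ 2)) := by
  rw [← Measure.restrict_congr_set Ioc_ae_eq_Icc]
  have hl : 0 < Real.log 2 := Real.log_pos (by norm_num)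
  have hb := birkhoff_ae gT_ergodic (by fun_prop : Measurable (fun x : ℝ => - Real.log x))
    gm_integral.1
  rw [gm_integral.2, gm, ae_withDensity_iff (by fun_prop)] at hb
  filter_upwards [hb, ae_good] with x h1 h2
  have hx := h2.2.1
  have hne : ENNReal.ofReal (1 / ((1 + x) * Real.log 2)) ≠ 0 := by
    rw [Ne, ENNReal.ofReal_eq_zero, not_le]; positivity
  have := lochs_tendsto h2 (c := Real.pi^2 / (12 * Real.log 2)) (by positivity) (h1 hne)
  rwa [inv_div] at this
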